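/- arXiv:1911.03990 — 6 statements merged into one kernel-verified Lean document; each statement's English description precedes it below -/
import Mathlib

section
/- For every even integer D ≥ 4 and every integer K ≥ 1, there exists a (D,K)-hypergraph whose number of block edges is exactly ⌈K/(D−2)⌉. -/
open scoped BigOperators

/-- A `(D,K)`-hypergraph: a finite vertex set `V` together with block edges and name
edges, each forming a set partition of `V`, where every block edge has exactly `D`
vertices, every name edge has fewer than `D` vertices, there are exactly `K` more name
edges than block edges, the hypergraph is connected, and some name edge and some block
edge share at least two vertices. -/
structure DKHypergraph (D K : ℕ) (V : Type) [Fintype V] [DecidableEq V] where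
  blockEdges : Finpartition (Finset.univ : Finset V)
  nameEdges : Finpartition (Finset.univ : Finset V)
  block_card : ∀ e ∈ blockEdges.parts, e.card = D
  name_card : ∀ e ∈ nameEdges.parts, e.card < D
  count_diff : nameEdges.parts.card = blockEdges.parts.card + K
  connected : ∀ v w : V, ∃ (n : ℕ) (e : Fin (n + 1) → Finset V),
      (∀ i, e i ∈ blockEdges.parts ∪ nameEdges.parts) ∧
      v ∈ e 0 ∧ w ∈ e (Fin.last n) ∧
      ∀ i : Fin n, ((e i.castSucc) ∩ (e i.succ)).Nonempty
  share : ∃ eN ∈ nameEdges.parts, ∃ eB ∈ blockEdges.parts, 2 ≤ (eN ∩ eB).card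

/-!
Arrange `D * B` vertices on a line and let the blocks be the `B` consecutive intervals of length
`D`. Take as name edges the interval `{0, …, e}` with `1 ≤ e ≤ D - 2`, the pairs
`{k * D - 1, k * D}` joining each block to the next one, and singletons. Every vertex then shares
an edge with its successor, so the hypergraph is connected, and there are `D * B - e - (B - 1)` name
edges. Hence `K = B * (D - 2) + 1 - e`, and as `e` runs through `1, …, D - 2` this takes exactly the
values `K` with `⌈K / (D - 2)⌉ = B`.
-/

open Finset

section CeilDiv

theorem natCeil_div_eq_ceilDiv {F : Type*} [Field F] [LinearOrder F] [IsStrictOrderedRing F]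
    [FloorSemiring F] (a : ℕ) {b : ℕ} (hb : 0 < b) : ⌈(a : F) / b⌉₊ = a ⌈/⌉ b := by
  refine eq_of_forall_ge_iff fun c => ?_
  rw [Nat.ceil_le, ceilDiv_le_iff_le_mul hb, div_le_iff₀ (Nat.cast_pos.2 hb), mul_comm]
  norm_cast

theorem mul_ceilDiv_lt (a : ℕ) {b : ℕ} (hb : 0 < b) : b * (a ⌈/⌉ b) < a + b := by
  rw [Nat.ceilDiv_eq_add_pred_div]
  have := Nat.mul_div_le (a + b - 1) b
  omega

end CeilDiv

section Chains

variable {V : Type*} [DecidableEq V] {S : Finset (Finset V)}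

theorem exists_edge_chain_of_reflTransGen (hS : ∀ v, ∃ s ∈ S, v ∈ s) {v w : V}
    (h : Relation.ReflTransGen (fun a b => ∃ s ∈ S, a ∈ s ∧ b ∈ s) v w) :
    ∃ (n : ℕ) (e : Fin (n + 1) → Finset V),
      (∀ i, e i ∈ S) ∧ v ∈ e 0 ∧ w ∈ e (Fin.last n) ∧
      ∀ i : Fin n, (e i.castSucc ∩ e i.succ).Nonempty := by
  induction h using Relation.ReflTransGen.head_induction_on with
  | refl =>
    obtain ⟨s, hs, hw⟩ := hS w
    exact ⟨0, fun _ => s, fun _ => hs, hw, hw, fun i => i.elim0⟩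
  | @head a c hac _ ih =>
    obtain ⟨s, hs, ha, hc⟩ := hac
    obtain ⟨n, e, he, hce, hwe, hinter⟩ := ih
    refine ⟨n + 1, Fin.cons s e, Fin.cases hs he, ha, ?_, Fin.cases ⟨c, ?_⟩ fun i => ?_⟩
    · simpa [← Fin.succ_last] using hwe
    · simpa using ⟨hc, hce⟩
    · simpa [← Fin.succ_castSucc] using hinter i

theorem exists_edge_chain_of_succ [LinearOrder V] [SuccOrder V] [IsSuccArchimedean V]
    (hS : ∀ v, ∃ s ∈ S, v ∈ s)
    (hsucc : ∀ v, ¬IsMax v → ∃ s ∈ S, v ∈ s ∧ Order.succ v ∈ s) (v w : V) :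
    ∃ (n : ℕ) (e : Fin (n + 1) → Finset V),
      (∀ i, e i ∈ S) ∧ v ∈ e 0 ∧ w ∈ e (Fin.last n) ∧
      ∀ i : Fin n, (e i.castSucc ∩ e i.succ).Nonempty := by
  refine exists_edge_chain_of_reflTransGen hS (reflTransGen_of_succ _ ?_ ?_)
  · exact fun i hi => hsucc i hi.2.not_isMax
  · intro i hi
    obtain ⟨s, hs, h, h'⟩ := hsucc i hi.2.not_isMax
    exact ⟨s, hs, h', h⟩

end Chains

section FiberPartition

variable {V α : Type*} [Fintype V] [DecidableEq V] [DecidableEq α]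

/-- The partition of a finite type into the nonempty fibers of `f`. Block and name edges are
specified by labelling the vertices. -/
def fiberPartition (f : V → α) : Finpartition (univ : Finset V) :=
  Finpartition.ofSetoid (Setoid.ker f)

theorem mem_parts_fiberPartition {f : V → α} {s : Finset V} :
    s ∈ (fiberPartition f).parts ↔ ∃ v, ({w | f v = f w} : Finset V) = s := by
  simp [fiberPartition, Finpartition.ofSetoid, Finpartition.ofSetSetoid, Setoid.ker_def]

theorem exists_mem_parts_fiberPartition {f : V → α} {v w : V} (h : f v = f w) :
    ∃ s ∈ (fiberPartition f).parts, v ∈ s ∧ w ∈ s :=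
  ⟨_, mem_parts_fiberPartition.2 ⟨v, rfl⟩, by simp, by simpa using h⟩

theorem card_parts_fiberPartition (f : V → α) :
    #(fiberPartition f).parts = #(univ.image f) := by
  have hparts : (fiberPartition f).parts =
      (univ.image f).image fun c => ({w | c = f w} : Finset V) := by
    ext s
    simp [mem_parts_fiberPartition]
  rw [hparts, card_image_of_injOn]
  intro c hc d _ hcd
  obtain ⟨v, -, rfl⟩ := mem_image.1 (mem_coe.1 hc)
  simpa [eq_comm] using Finset.ext_iff.1 hcd v

end FiberPartition

theorem image_univ_comp_val {α : Type*} [DecidableEq α] (n : ℕ) (g : ℕ → α) :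
    (univ : Finset (Fin n)).image (fun v : Fin n => g v) = (range n).image g := by
  ext c
  simp [Fin.exists_iff]

theorem card_filter_univ_val (n : ℕ) (p : ℕ → Prop) [DecidablePred p] :
    #{v : Fin n | p v} = #{x ∈ range n | p x} := by
  rw [← card_map Fin.valEmbedding]
  congr 1
  ext x
  simp [Fin.exists_iff, and_comm]

theorem image_eq_filter_of_idempotent {α : Type*} [DecidableEq α] {s : Finset α} {r : α → α}
    (hmaps : ∀ x ∈ s, r x ∈ s) (hidem : ∀ x ∈ s, r (r x) = r x) :
    s.image r = {x ∈ s | r x = x} := by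
  ext y
  simp only [mem_image, mem_filter]
  constructor
  · rintro ⟨x, hx, rfl⟩
    exact ⟨hmaps x hx, hidem x hx⟩
  · rintro ⟨hy, hry⟩
    exact ⟨y, hy, hry⟩

section BlockLabel

theorem card_filter_range_div_eq {D B c : ℕ} (hc : c < B) :
    #{x ∈ range (D * B) | c = x / D} = D := by
  obtain rfl | hD := D.eq_zero_or_pos
  · simp
  have hIco : {x ∈ range (D * B) | c = x / D} = Ico (D * c) (D * c + D) := by
    ext x
    have hle : D * c + D ≤ D * B := Nat.mul_le_mul_left D hc
    simp only [mem_filter, mem_range, mem_Ico, eq_comm (a := c), Nat.div_eq_iff hD, mul_comm c]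
    omega
  rw [hIco, Nat.card_Ico, Nat.add_sub_cancel_left]

theorem image_div_range_mul {D : ℕ} (hD : 0 < D) (B : ℕ) :
    (range (D * B)).image (· / D) = range B := by
  ext c
  simp only [mem_image, mem_range]
  constructor
  · rintro ⟨x, hx, rfl⟩
    exact Nat.div_lt_of_lt_mul hx
  · intro hc
    exact ⟨D * c, Nat.mul_lt_mul_of_pos_left hc hD, Nat.mul_div_cancel_left c hD⟩

end BlockLabel

section NameLabel

/-- For `e + 1 < D`, the least vertex of the name edge containing `x`, in the arrangement of the
vertices on a line where the name edges are `{0, …, e}`, the pairs `{k * D - 1, k * D}` with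
`k ≥ 1`, and singletons. -/
def nameLabel (D e x : ℕ) : ℕ :=
  if x ≤ e then 0 else if D ∣ x then x - 1 else x

theorem card_filter_nameLabel_eq_le (D e c : ℕ) (s : Finset ℕ) :
    #{x ∈ s | c = nameLabel D e x} ≤ max (e + 1) 2 := by
  obtain rfl | hc := c.eq_zero_or_pos
  · have hsub : {x ∈ s | 0 = nameLabel D e x} ⊆ range (max (e + 1) 2) := by
      intro x
      simp only [nameLabel, mem_range]
      grind
    simpa using card_le_card hsub
  · have hsub : {x ∈ s | c = nameLabel D e x} ⊆ {c, c + 1} := by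
      intro x
      simp only [nameLabel, mem_insert, mem_singleton]
      grind
    exact (card_le_card hsub).trans (card_le_two.trans (le_max_right _ _))

theorem nameLabel_le (D e x : ℕ) : nameLabel D e x ≤ x := by
  unfold nameLabel
  grind

variable {D e : ℕ}

theorem nameLabel_eq_of_dvd_succ {x : ℕ} (h : e + 1 < D) (hx : D ∣ x + 1) :
    nameLabel D e x = nameLabel D e (x + 1) := by
  have hle : D ≤ x + 1 := Nat.le_of_dvd x.succ_pos hx
  have hndvd : ¬D ∣ x := fun hdvd => by
    have := Nat.dvd_one.1 ((Nat.dvd_add_right hdvd).1 hx)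
    omega
  unfold nameLabel
  grind

theorem nameLabel_nameLabel (h : e + 1 < D) (x : ℕ) :
    nameLabel D e (nameLabel D e x) = nameLabel D e x := by
  by_cases hx : e < x ∧ D ∣ x
  · obtain ⟨y, rfl⟩ := Nat.exists_eq_succ_of_ne_zero (Nat.ne_zero_of_lt hx.1)
    have hy : nameLabel D e (y + 1) = y := by simp [nameLabel, hx.1.not_ge, hx.2]
    rw [hy, nameLabel_eq_of_dvd_succ h hx.2, hy]
  · unfold nameLabel
    grind

theorem card_image_nameLabel_add {B : ℕ} (h : e + 1 < D) (hB : 0 < B) :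
    #((range (D * B)).image (nameLabel D e)) + (e + (B - 1)) = D * B := by
  have hmoved : {x ∈ range (D * B) | nameLabel D e x ≠ x} =
      Ioc 0 e ∪ {x ∈ Ioc 0 (D * B - 1) | D ∣ x} := by
    have hle : D ≤ D * B := Nat.le_mul_of_pos_right D hB
    ext x
    simp only [nameLabel, mem_filter, mem_union, mem_Ioc]
    grind
  have hdisj : Disjoint (Ioc 0 e) {x ∈ Ioc 0 (D * B - 1) | D ∣ x} := by
    simp only [disjoint_left, mem_Ioc, mem_filter]
    intro x hx hdvd
    have := Nat.le_of_dvd hx.1 hdvd.2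
    omega
  have hdiv : (D * B - 1) / D = B - 1 := by
    simpa using Nat.mul_sub_div 0 D B (Nat.mul_pos (by omega) hB)
  have hcard : #{x ∈ range (D * B) | nameLabel D e x ≠ x} = e + (B - 1) := by
    rw [hmoved, card_union_of_disjoint hdisj, Nat.card_Ioc, Nat.Ioc_filter_dvd_card_eq_div, hdiv,
      Nat.sub_zero]
  rw [image_eq_filter_of_idempotent
      (fun x hx => mem_range.2 ((nameLabel_le D e x).trans_lt (mem_range.1 hx)))
      (fun x _ => nameLabel_nameLabel h x),
    ← hcard, card_filter_add_card_filter_not, card_range]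

end NameLabel

section Construction

/-- The partition of a line of `D * B` vertices into consecutive intervals of length `D`. -/
def blockPartition (D B : ℕ) : Finpartition (univ : Finset (Fin (D * B))) :=
  fiberPartition fun v => v.val / D

/-- For `e + 1 < D`, the partition of a line of `D * B` vertices into `{0, …, e}`, the pairs
`{k * D - 1, k * D}` joining consecutive blocks, and singletons. -/
def namePartition (D B e : ℕ) : Finpartition (univ : Finset (Fin (D * B))) :=
  fiberPartition fun v => nameLabel D e v

theorem card_of_mem_blockPartition {D B : ℕ} {s : Finset (Fin (D * B))}
    (hs : s ∈ (blockPartition D B).parts) : #s = D := by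
  obtain ⟨v, rfl⟩ := mem_parts_fiberPartition.1 hs
  rw [card_filter_univ_val _ (fun x => v.val / D = x / D)]
  exact card_filter_range_div_eq (Nat.div_lt_of_lt_mul v.isLt)

theorem card_le_of_mem_namePartition {D B e : ℕ} {s : Finset (Fin (D * B))}
    (hs : s ∈ (namePartition D B e).parts) : #s ≤ max (e + 1) 2 := by
  obtain ⟨v, rfl⟩ := mem_parts_fiberPartition.1 hs
  rw [card_filter_univ_val _ (fun x => nameLabel D e v = nameLabel D e x)]
  exact card_filter_nameLabel_eq_le D e _ _

theorem card_parts_blockPartition {D : ℕ} (hD : 0 < D) (B : ℕ) :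
    #(blockPartition D B).parts = B := by
  rw [blockPartition, card_parts_fiberPartition, image_univ_comp_val _ (· / D),
    image_div_range_mul hD, card_range]

variable {D K B e : ℕ}

theorem card_parts_namePartition_add (heD : e + 1 < D) (hB : 0 < B) :
    #(namePartition D B e).parts + (e + (B - 1)) = D * B := by
  rw [namePartition, card_parts_fiberPartition, image_univ_comp_val _ (nameLabel D e),
    card_image_nameLabel_add heD hB]

theorem exists_edge_mem_succ_mem (heD : e + 1 < D) (v : Fin (D * B)) (hv : ¬IsMax v) :
    ∃ s ∈ (blockPartition D B).parts ∪ (namePartition D B e).parts, v ∈ s ∧ Order.succ v ∈ s := by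
  have hsucc : (Order.succ v).val = v + 1 := by
    have := Order.covBy_succ_of_not_isMax hv
    simpa [eq_comm] using this
  by_cases hdvd : D ∣ v + 1
  · obtain ⟨s, hs, hmem⟩ := exists_mem_parts_fiberPartition
      (f := fun w : Fin (D * B) => nameLabel D e w) (v := v) (w := Order.succ v)
      (by rw [hsucc, nameLabel_eq_of_dvd_succ heD hdvd])
    exact ⟨s, mem_union_right _ hs, hmem⟩
  · obtain ⟨s, hs, hmem⟩ := exists_mem_parts_fiberPartition
      (f := fun w : Fin (D * B) => w.val / D) (v := v) (w := Order.succ v)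
      (by rw [hsucc, Nat.succ_div_of_not_dvd hdvd])
    exact ⟨s, mem_union_left _ hs, hmem⟩

theorem exists_two_le_card_inter (he : 0 < e) (heD : e + 1 < D) (hB : 0 < B) :
    ∃ s ∈ (namePartition D B e).parts, ∃ t ∈ (blockPartition D B).parts, 2 ≤ #(s ∩ t) := by
  have hle : D ≤ D * B := Nat.le_mul_of_pos_right D hB
  let v₀ : Fin (D * B) := ⟨0, by omega⟩
  let v₁ : Fin (D * B) := ⟨1, by omega⟩
  obtain ⟨s, hs, h₀s, h₁s⟩ := exists_mem_parts_fiberPartition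
    (f := fun w : Fin (D * B) => nameLabel D e w) (v := v₀) (w := v₁)
    (by simp [v₀, v₁, nameLabel, Nat.one_le_iff_ne_zero, he.ne'])
  obtain ⟨t, ht, h₀t, h₁t⟩ := exists_mem_parts_fiberPartition
    (f := fun w : Fin (D * B) => w.val / D) (v := v₀) (w := v₁)
    (by simp [v₀, v₁, Nat.div_eq_of_lt (show 1 < D by omega)])
  refine ⟨s, hs, t, ht, one_lt_card.2 ⟨v₀, mem_inter.2 ⟨h₀s, h₀t⟩, v₁, mem_inter.2 ⟨h₁s, h₁t⟩, ?_⟩⟩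
  simp [v₀, v₁]

/-- The `(D, K)`-hypergraph with block edges `blockPartition D B` and name edges
`namePartition D B e`. The equation `hK` is `K = B * (D - 2) + 1 - e`, stated without
subtraction. -/
def intervalHypergraph (he : 0 < e) (heD : e + 1 < D) (hB : 0 < B)
    (hK : D * B + 1 = K + e + 2 * B) : DKHypergraph D K (Fin (D * B)) where
  blockEdges := blockPartition D B
  nameEdges := namePartition D B e
  block_card _ hs := card_of_mem_blockPartition hs
  name_card _ hs := (card_le_of_mem_namePartition hs).trans_lt (by omega)
  count_diff := by
    have hblocks := card_parts_blockPartition (D := D) (by omega) B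
    have hnames := card_parts_namePartition_add heD hB
    omega
  connected := by
    refine exists_edge_chain_of_succ (fun v => ?_) (exists_edge_mem_succ_mem heD)
    obtain ⟨s, hs, hv⟩ := (blockPartition D B).exists_mem (mem_univ v)
    exact ⟨s, mem_union_left _ hs, hv⟩
  share := exists_two_le_card_inter he heD hB

end Construction

theorem exists_DK_hypergraph_general (D K : ℕ) (hD : 3 ≤ D) (hK : 1 ≤ K) :
    ∃ (n : ℕ) (H : DKHypergraph D K (Fin n)),
      H.blockEdges.parts.card = ⌈(K : ℚ) / ((D : ℚ) - 2)⌉₊ := by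
  obtain ⟨d, rfl⟩ : ∃ d, D = d + 2 := ⟨D - 2, by omega⟩
  have hd : 0 < d := by omega
  have hceil : ⌈(K : ℚ) / (((d + 2 : ℕ) : ℚ) - 2)⌉₊ = K ⌈/⌉ d := by
    rw [← natCeil_div_eq_ceilDiv (F := ℚ) K hd, Nat.cast_add, Nat.cast_ofNat, add_sub_cancel_right]
  rw [hceil]
  have hle : K ≤ d * (K ⌈/⌉ d) := le_smul_ceilDiv hd
  have hlt : d * (K ⌈/⌉ d) < K + d := mul_ceilDiv_lt K hd
  have hpos : 0 < K ⌈/⌉ d := Nat.pos_of_mul_pos_left (hK.trans hle)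
  refine ⟨_, intervalHypergraph (e := d * (K ⌈/⌉ d) + 1 - K) (B := K ⌈/⌉ d)
    (by omega) (by omega) hpos ?_, card_parts_blockPartition (by omega) _⟩
  rw [add_mul]
  omega

/-- For every even `D ≥ 4` and every `K ≥ 1` there is a `(D,K)`-hypergraph with exactly
`⌈K/(D-2)⌉` block edges. -/
theorem exists_DK_hypergraph (D K : ℕ) (hD : 4 ≤ D) (hDeven : Even D) (hK : 1 ≤ K) :
    ∃ (n : ℕ) (H : DKHypergraph D K (Fin n)),
      H.blockEdges.parts.card = ⌈(K : ℚ) / ((D : ℚ) - 2)⌉₊ :=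
  exists_DK_hypergraph_general D K (by omega) hK
end

section
/- Let m ≥ 1 and let ν be the partition with m rows whose first row has length 4m and whose remaining m−1 rows each have length 2m (i.e., ν = (2m) + (m × 2m)). Then there is exactly one semistandard Young tableau of shape ν with entries in {1,…,m} in which every entry i ∈ {1,…,m} occurs exactly 2m+2 times. -/
open scoped BigOperators

/-- The `c`-th column of a tableau of shape `lam` (row lengths `lam r`),
read from top to bottom. -/
def tabCol {m : ℕ} {A : Type*} (lam : Fin m → ℕ) (T : (r : Fin m) → Fin (lam r) → A)
    (c : ℕ) : List A :=
  (List.finRange m).filterMap (fun r => if h : c < lam r then some (T r ⟨c, h⟩) else none)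

/-- A tableau is regular if no column has a repeated entry. -/
def TabRegular {m : ℕ} {A : Type*} (lam : Fin m → ℕ)
    (T : (r : Fin m) → Fin (lam r) → A) : Prop :=
  ∀ c : ℕ, (tabCol lam T c).Nodup

/-- The number of columns of the shape `lam`. -/
def tabWidth {m : ℕ} (lam : Fin m → ℕ) : ℕ := Finset.univ.sup lam

/-- A tableau is duplex if every column (as an ordered sequence of entries)
occurs an even number of times among its columns. -/
def TabDuplex {m : ℕ} {A : Type*} [DecidableEq A] (lam : Fin m → ℕ)
    (T : (r : Fin m) → Fin (lam r) → A) : Prop :=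
  ∀ c < tabWidth lam,
    Even (((Finset.range (tabWidth lam)).filter
      (fun c' => tabCol lam T c' = tabCol lam T c)).card)

/-- The number of occurrences of the entry `a` in the tableau `T`. -/
def tabCount {m : ℕ} {A : Type*} [DecidableEq A] (lam : Fin m → ℕ)
    (T : (r : Fin m) → Fin (lam r) → A) (a : A) : ℕ :=
  ∑ r : Fin m, ((Finset.univ : Finset (Fin (lam r))).filter (fun c => T r c = a)).card

/-- The leftmost `e` columns of a tableau of shape `(m × e) + lam`. -/
def tabLeft {m : ℕ} {A : Type*} (lam : Fin m → ℕ) (e : ℕ)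
    (T : (r : Fin m) → Fin (e + lam r) → A) : (r : Fin m) → Fin e → A :=
  fun r c => T r (Fin.castLE (Nat.le_add_right e (lam r)) c)

/-- The shape-`lam` subtableau of a tableau of shape `(m × e) + lam` formed by the
columns after the leftmost `e` columns. -/
def tabRight {m : ℕ} {A : Type*} (lam : Fin m → ℕ) (e : ℕ)
    (T : (r : Fin m) → Fin (e + lam r) → A) : (r : Fin m) → Fin (lam r) → A :=
  fun r c => T r ⟨e + c.1, Nat.add_lt_add_left c.isLt e⟩

/-- The partition `ν = (2m) + (m × 2m)`: `m` rows, first row of length `4m`,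
all other rows of length `2m`. -/
def nuShape (m : ℕ) : Fin m → ℕ := fun r => if (r : ℕ) = 0 then 4 * m else 2 * m

/-!
Every column of full height `m` is a strictly increasing sequence of `m` entries from an `m`-element
alphabet, so its entry in row `r` is `r`. In the shape `(K) + (m × N)` this fixes every row except
the first, and the first row must start with `N` copies of the smallest entry. When the content is
`N + k i` with `∑ i, k i = K`, the rows below the first account for `N` copies of every other entry,
so the first row contains `k i` copies of each `i` besides these `N` copies of the smallest entry.
A weakly increasing word is determined by how often each letter occurs, and the word so obtained
does give a semistandard tableau. The partition `ν` is the case `N = 2m`, `k i = 2`.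
-/

section MonotoneWords

open Finset

variable {α : Type*} {n : ℕ}

theorem monotone_and_map_univ_eq_iff [LinearOrder α] {f : Fin n → α} {s : Multiset α} :
    Monotone f ∧ univ.val.map f = s ↔ List.ofFn f = s.sort := by
  rw [Fin.univ_val_map]
  constructor
  · rintro ⟨hf, rfl⟩
    exact (Multiset.coe_eq_coe.mp (Multiset.sort_eq _ _).symm).eq_of_sortedLE
      hf.sortedLE_ofFn (Multiset.pairwise_sort _ _).sortedLE
  · intro h
    refine ⟨List.sortedLE_ofFn_iff.mp ?_, by rw [h, Multiset.sort_eq]⟩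
    rw [h]
    exact (Multiset.pairwise_sort _ _).sortedLE

theorem existsUnique_monotone_map_univ_eq [LinearOrder α] {s : Multiset α} (hs : s.card = n) :
    ∃! f : Fin n → α, Monotone f ∧ univ.val.map f = s := by
  simp only [monotone_and_map_univ_eq_iff]
  obtain rfl : s.sort.length = n := (Multiset.length_sort (· ≤ ·)).trans hs
  exact ⟨s.sort.get, List.ofFn_get _, fun f hf =>
    List.ofFn_injective (hf.trans (List.ofFn_get _).symm)⟩

theorem count_map_univ {ι : Type*} [Fintype ι] [DecidableEq α] (f : ι → α) (a : α) :
    (univ.val.map f).count a = #{i | f i = a} := by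
  simp only [Multiset.count_map, card_def, filter_val, eq_comm]

theorem existsUnique_monotone_card_fiber_eq [LinearOrder α] [Fintype α] (k : α → ℕ)
    (hk : ∑ a, k a = n) :
    ∃! f : Fin n → α, Monotone f ∧ ∀ a, #{c | f c = a} = k a := by
  let s := Finsupp.toMultiset (Finsupp.equivFunOnFinite.symm k)
  have hs : s.card = n := by
    simpa [s, Finsupp.card_toMultiset, Finsupp.sum_fintype] using hk
  have hcount (f : Fin n → α) : univ.val.map f = s ↔ ∀ a, #{c | f c = a} = k a := by
    simp only [Multiset.ext, count_map_univ, s, Finsupp.count_toMultiset,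
      Finsupp.equivFunOnFinite_symm_apply_apply]
  simpa only [hcount] using existsUnique_monotone_map_univ_eq hs

theorem eq_of_monotone_of_lt_card_fiber [PartialOrder α] [DecidableEq α] {f : Fin n → α}
    (hf : Monotone f) {a : α} (ha : IsMin a) {c : Fin n} (hc : c < #{c' | f c' = a}) : f c = a := by
  by_contra hne
  have hsub : ({c' | f c' = a} : Finset (Fin n)) ⊆ Iio c := by
    intro c' hc'
    rw [mem_filter_univ] at hc'
    rw [mem_Iio]
    by_contra! hcc'
    exact hne (ha.eq_of_le (hc' ▸ hf hcc'))
  have := card_le_card hsub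
  rw [Fin.card_Iio] at this
  omega

end MonotoneWords

/-- Column strictness of a tableau of shape `lam`: the entries of each column strictly increase
from top to bottom. Since `lam` need not be weakly decreasing, a column may skip rows, so all pairs
of rows are compared rather than only consecutive ones. -/
def TabColStrict {m : ℕ} {A : Type*} [LT A] (lam : Fin m → ℕ)
    (T : (r : Fin m) → Fin (lam r) → A) : Prop :=
  ∀ r r' : Fin m, r < r' → ∀ (c : ℕ) (h : c < lam r) (h' : c < lam r'), T r ⟨c, h⟩ < T r' ⟨c, h'⟩

theorem TabColStrict.apply_eq_row {m : ℕ} {lam : Fin m → ℕ} {T : (r : Fin m) → Fin (lam r) → Fin m}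
    (hT : TabColStrict lam T) {c : ℕ} (hc : ∀ r, c < lam r) (r : Fin m) : T r ⟨c, hc r⟩ = r :=
  have hcol : StrictMono fun r => T r ⟨c, hc r⟩ := fun r r' h => hT r r' h c (hc r) (hc r')
  le_antisymm hcol.apply_le hcol.le_apply

section FirstRow

open Finset

variable {m : ℕ} [NeZero m] {lam : Fin m → ℕ} {N : ℕ}

/-- The filling of the shape `lam` whose first row is `w` and whose row `r` is constantly `r` for
every other `r`. -/
def tabOfFirstRow (w : Fin (lam 0) → Fin m) : (r : Fin m) → Fin (lam r) → Fin m :=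
  Function.update (fun r _ => r) 0 w

theorem tabOfFirstRow_zero (w : Fin (lam 0) → Fin m) : tabOfFirstRow w 0 = w :=
  Function.update_self ..

theorem tabOfFirstRow_of_ne (w : Fin (lam 0) → Fin m) {r : Fin m} (hr : r ≠ 0) :
    tabOfFirstRow w r = fun _ => r :=
  Function.update_of_ne hr ..

theorem TabColStrict.eq_tabOfFirstRow {T : (r : Fin m) → Fin (lam r) → Fin m}
    (hT : TabColStrict lam T) (hlam : ∀ r ≠ 0, ∀ r', lam r ≤ lam r') : T = tabOfFirstRow (T 0) := by
  funext r
  rcases eq_or_ne r 0 with rfl | hr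
  · rw [tabOfFirstRow_zero]
  · rw [tabOfFirstRow_of_ne _ hr]
    exact funext fun c => hT.apply_eq_row (fun r' => c.isLt.trans_le (hlam r hr r')) r

theorem monotone_tabOfFirstRow {w : Fin (lam 0) → Fin m} (hw : Monotone w) (r : Fin m) :
    Monotone (tabOfFirstRow w r) := by
  rcases eq_or_ne r 0 with rfl | hr
  · rwa [tabOfFirstRow_zero]
  · rw [tabOfFirstRow_of_ne _ hr]
    exact monotone_const

theorem tabColStrict_tabOfFirstRow {w : Fin (lam 0) → Fin m}
    (hw : ∀ c : Fin (lam 0), ∀ r ≠ 0, c < lam r → w c = 0) :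
    TabColStrict lam (tabOfFirstRow w) := by
  intro r r' hrr' c h h'
  have hr' : r' ≠ 0 := ((Fin.zero_le r).trans_lt hrr').ne'
  rw [tabOfFirstRow_of_ne w hr']
  rcases eq_or_ne r 0 with rfl | hr
  · rwa [tabOfFirstRow_zero, hw ⟨c, h⟩ r' hr' h']
  · rwa [tabOfFirstRow_of_ne w hr]

theorem tabCount_tabOfFirstRow (w : Fin (lam 0) → Fin m) (i : Fin m) :
    tabCount lam (tabOfFirstRow w) i = #{c | w c = i} + if i = 0 then 0 else lam i := by
  have hrow : ∀ r ∈ univ.erase (0 : Fin m),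
      #{c | tabOfFirstRow w r c = i} = if i = r then lam r else 0 := by
    intro r hr
    rw [tabOfFirstRow_of_ne w (ne_of_mem_erase hr), filter_const, apply_ite card, card_univ,
      Fintype.card_fin, card_empty]
    simp only [eq_comm]
  rw [tabCount, ← add_sum_erase _ _ (mem_univ 0), tabOfFirstRow_zero, sum_congr rfl hrow,
    sum_ite_eq]
  simp only [mem_erase, mem_univ, and_true, ite_not]

theorem tabCount_tabOfFirstRow_eq_add_iff (hlam : ∀ r ≠ 0, lam r = N) (w : Fin (lam 0) → Fin m)
    (k : Fin m → ℕ) (i : Fin m) :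
    tabCount lam (tabOfFirstRow w) i = N + k i ↔
      #{c | w c = i} = (Pi.single 0 N + k : Fin m → ℕ) i := by
  rw [tabCount_tabOfFirstRow]
  rcases eq_or_ne i 0 with rfl | hi
  · simp
  · simp [hi, hlam i hi, add_comm]

theorem unique_ssyt_nu_general (k : Fin m → ℕ) (hzero : lam 0 = N + ∑ i, k i)
    (hlam : ∀ r ≠ 0, lam r = N) :
    ∃! T : (r : Fin m) → Fin (lam r) → Fin m,
      (∀ r, Monotone (T r)) ∧ TabColStrict lam T ∧ ∀ i, tabCount lam T i = N + k i := by
  obtain ⟨w, ⟨hmono, hfiber⟩, huniq⟩ :=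
    existsUnique_monotone_card_fiber_eq (n := lam 0) (Pi.single 0 N + k)
      (by simp [sum_add_distrib, hzero])
  have hzero_min : IsMin (0 : Fin m) := fun i _ => Fin.zero_le i
  have hstart (c : Fin (lam 0)) (r : Fin m) (hr : r ≠ 0) (hc : c < lam r) : w c = 0 := by
    refine eq_of_monotone_of_lt_card_fiber hmono hzero_min ?_
    rw [hfiber, Pi.add_apply, Pi.single_eq_same]
    exact (hc.trans_eq (hlam r hr)).trans_le (Nat.le_add_right N _)
  refine ⟨tabOfFirstRow w, ⟨monotone_tabOfFirstRow hmono, tabColStrict_tabOfFirstRow hstart,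
    fun i => (tabCount_tabOfFirstRow_eq_add_iff hlam w k i).mpr (hfiber i)⟩, ?_⟩
  rintro T ⟨hrows, hcols, hcontent⟩
  have hmin (r : Fin m) (hr : r ≠ 0) (r' : Fin m) : lam r ≤ lam r' := by
    rcases eq_or_ne r' 0 with rfl | hr'
    · rw [hlam r hr, hzero]
      exact Nat.le_add_right N _
    · rw [hlam r hr, hlam r' hr']
  have hT : T = tabOfFirstRow (T 0) := hcols.eq_tabOfFirstRow hmin
  have hT_fiber (i : Fin m) : #{c | T 0 c = i} = (Pi.single 0 N + k : Fin m → ℕ) i :=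
    (tabCount_tabOfFirstRow_eq_add_iff hlam (T 0) k i).mp (hT ▸ hcontent i)
  rw [hT, huniq (T 0) ⟨hrows 0, hT_fiber⟩]

end FirstRow

theorem nuShape_zero (m : ℕ) [NeZero m] : nuShape m 0 = 2 * m + ∑ _ : Fin m, 2 := by
  simp only [nuShape, Fin.val_zero, if_pos, Finset.sum_const, Finset.card_univ, Fintype.card_fin,
    smul_eq_mul]
  ring

theorem nuShape_of_ne_zero {m : ℕ} [NeZero m] {r : Fin m} (hr : r ≠ 0) : nuShape m r = 2 * m :=
  if_neg (Fin.val_ne_zero_iff.mpr hr)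

/-- There is exactly one semistandard Young tableau of shape `ν = (2m) + (m × 2m)` with
entries in `{1,…,m}` in which every entry occurs exactly `2m+2` times. -/
theorem unique_ssyt_nu (m : ℕ) (hm : 1 ≤ m) :
    ∃! T : (r : Fin m) → Fin (nuShape m r) → Fin m,
      (∀ r : Fin m, Monotone (T r)) ∧
      (∀ r r' : Fin m, r < r' → ∀ (c : ℕ) (h : c < nuShape m r) (h' : c < nuShape m r'),
          T r ⟨c, h⟩ < T r' ⟨c, h'⟩) ∧
      (∀ i : Fin m, tabCount (nuShape m) T i = 2 * m + 2) := by
  have : NeZero m := ⟨Nat.one_le_iff_ne_zero.mp hm⟩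
  exact unique_ssyt_nu_general (fun _ => 2) (nuShape_zero m) fun _ => nuShape_of_ne_zero
end

section
/- Let D ≥ 4 be even, m ≥ 1, and d ≥ 1. For a partition ρ = (ρ_1 ≥ … ≥ ρ_m ≥ 0) of d with at most m parts, set e_ρ := Σ_{i=1}^{m} ⌈ρ_i/(D−2)⌉. Then the maximum of e_ρ over all partitions ρ of d with at most m parts equals d if d ≤ m, and equals m + ⌊(d−m)/(D−2)⌋ if d ≥ m. -/
open scoped BigOperators

/-!
Write `k = D - 2`. Since `⌈a / k⌉ ≤ a`, no partition of `d` gives more than `d`, and for `d ≤ m` the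
partition into `d` ones gives exactly that. For `d ≥ m`, summing `k * ⌈a / k⌉ ≤ a + (k - 1)` over
the `m` parts gives `k * e ≤ (d - m) + k * m`, hence the upper bound; the hook
`(d - m + 1, 1, …, 1)` attains it because `⌈(n + 1) / k⌉ = ⌊n / k⌋ + 1`.
-/

theorem natCeil_natCast_div_natCast {K : Type*} [Field K] [LinearOrder K] [IsStrictOrderedRing K]
    [FloorSemiring K] (a k : ℕ) : ⌈(a : K) / k⌉₊ = a ⌈/⌉ k := by
  rcases k.eq_zero_or_pos with rfl | hk
  · simp
  · refine eq_of_forall_ge_iff fun c ↦ ?_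
    rw [Nat.ceil_le, div_le_iff₀' (Nat.cast_pos.2 hk), ceilDiv_le_iff_le_mul hk]
    exact_mod_cast Iff.rfl

section CeilDiv

variable {k : ℕ}

theorem ceilDiv_le_self (hk : 0 < k) (a : ℕ) : a ⌈/⌉ k ≤ a :=
  (ceilDiv_le_iff_le_mul hk).2 (Nat.le_mul_of_pos_left a hk)

theorem add_one_ceilDiv (hk : 0 < k) (n : ℕ) : (n + 1) ⌈/⌉ k = n / k + 1 := by
  rw [Nat.ceilDiv_eq_add_pred_div, Nat.add_right_comm, Nat.add_sub_cancel, Nat.add_div_right n hk]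

theorem mul_ceilDiv_le_add_pred (a : ℕ) : k * (a ⌈/⌉ k) ≤ a + (k - 1) :=
  (Nat.mul_div_le (a + k - 1) k).trans (by omega)

theorem sum_ceilDiv_le_card_add_div {ι : Type*} {s : Finset ι} {f : ι → ℕ} (hk : 0 < k)
    (hs : s.card ≤ ∑ i ∈ s, f i) :
    ∑ i ∈ s, f i ⌈/⌉ k ≤ s.card + (∑ i ∈ s, f i - s.card) / k := by
  have hmul : k * ∑ i ∈ s, f i ⌈/⌉ k ≤ (∑ i ∈ s, f i - s.card) + k * s.card := calc
    k * ∑ i ∈ s, f i ⌈/⌉ k = ∑ i ∈ s, k * (f i ⌈/⌉ k) := Finset.mul_sum ..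
    _ ≤ ∑ i ∈ s, (f i + (k - 1)) := Finset.sum_le_sum fun i _ ↦ mul_ceilDiv_le_add_pred (f i)
    _ = ∑ i ∈ s, f i + s.card * (k - 1) := by
      rw [Finset.sum_add_distrib, Finset.sum_const, smul_eq_mul]
    _ = (∑ i ∈ s, f i - s.card) + k * s.card := by
      rw [Nat.mul_sub_one, mul_comm k]
      have := Nat.le_mul_of_pos_right s.card hk
      omega
  calc
    ∑ i ∈ s, f i ⌈/⌉ k ≤ ((∑ i ∈ s, f i - s.card) + k * s.card) / k :=
      (Nat.le_div_iff_mul_le hk).2 (mul_comm k _ ▸ hmul)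
    _ = s.card + (∑ i ∈ s, f i - s.card) / k := by
      rw [Nat.add_mul_div_left _ _ hk, add_comm]

end CeilDiv

/-- The values `∑ i, ⌈ρ i / k⌉` over the partitions `ρ` of `d` with at most `m` parts, a partition
being encoded as an antitone function on `Fin m`, padded with zeros. -/
def ceilDivSums (k m d : ℕ) : Set ℕ :=
  {e | ∃ ρ : Fin m → ℕ, Antitone ρ ∧ ∑ i, ρ i = d ∧ e = ∑ i, ρ i ⌈/⌉ k}

section Extremal

variable {k m d : ℕ}

theorem mem_ceilDivSums_of_le (hk : 0 < k) (hdm : d ≤ m) : d ∈ ceilDivSums k m d := by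
  let ones : Fin m → ℕ := fun i ↦ if (i : ℕ) < d then 1 else 0
  have hsum : ∑ i, ones i = d := by
    rw [Finset.sum_boole, Fin.card_filter_val_lt, min_eq_right hdm, Nat.cast_id]
  have hceil (i : Fin m) : ones i ⌈/⌉ k = ones i := by
    have hone : 1 ⌈/⌉ k = 1 := by simpa using add_one_ceilDiv hk 0
    by_cases hi : (i : ℕ) < d <;> simp [ones, hi, hone]
  refine ⟨ones, fun i j hij ↦ ?_, hsum, by simp only [hceil, hsum]⟩
  have : (i : ℕ) ≤ j := hij
  grind

theorem add_div_mem_ceilDivSums (hk : 0 < k) (hm : 0 < m) (hmd : m ≤ d) :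
    m + (d - m) / k ∈ ceilDivSums k m d := by
  have : NeZero m := ⟨hm.ne'⟩
  let hook : Fin m → ℕ := (Pi.single 0 (d - m) : Fin m → ℕ) + 1
  have hceil (i : Fin m) : hook i ⌈/⌉ k = (Pi.single 0 ((d - m) / k) : Fin m → ℕ) i + 1 := by
    refine (add_one_ceilDiv hk _).trans ?_
    by_cases hi : i = 0 <;> simp [hi]
  refine ⟨hook, fun i j hij ↦ ?_, ?_, ?_⟩
  · rcases eq_or_ne j 0 with rfl | hj
    · rw [nonpos_iff_eq_zero.1 hij]
    · simp [hook, hj]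
  · simp [hook, Finset.sum_add_distrib, hmd]
  · simp [hceil, Finset.sum_add_distrib, add_comm]

theorem isGreatest_ceilDivSums_of_le (hk : 0 < k) (hdm : d ≤ m) :
    IsGreatest (ceilDivSums k m d) d := by
  refine ⟨mem_ceilDivSums_of_le hk hdm, ?_⟩
  rintro _ ⟨ρ, -, rfl, rfl⟩
  exact Finset.sum_le_sum fun i _ ↦ ceilDiv_le_self hk (ρ i)

theorem isGreatest_ceilDivSums_of_ge (hk : 0 < k) (hm : 0 < m) (hmd : m ≤ d) :
    IsGreatest (ceilDivSums k m d) (m + (d - m) / k) := by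
  refine ⟨add_div_mem_ceilDivSums hk hm hmd, ?_⟩
  rintro _ ⟨ρ, -, rfl, rfl⟩
  simpa using sum_ceilDiv_le_card_add_div (s := Finset.univ) (f := ρ) hk (by simpa using hmd)

end Extremal

theorem max_erho_even_general (D m d : ℕ) (hD : 3 ≤ D) (hm : 1 ≤ m) :
    (d ≤ m → IsGreatest
      {e : ℕ | ∃ ρ : Fin m → ℕ, (∀ i j : Fin m, i ≤ j → ρ j ≤ ρ i) ∧ (∑ i, ρ i = d) ∧
        e = ∑ i, ⌈(ρ i : ℚ) / ((D : ℚ) - 2)⌉₊} d) ∧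
    (m ≤ d → IsGreatest
      {e : ℕ | ∃ ρ : Fin m → ℕ, (∀ i j : Fin m, i ≤ j → ρ j ≤ ρ i) ∧ (∑ i, ρ i = d) ∧
        e = ∑ i, ⌈(ρ i : ℚ) / ((D : ℚ) - 2)⌉₊} (m + (d - m) / (D - 2))) := by
  obtain ⟨k, rfl⟩ := Nat.exists_eq_add_of_le' (show 2 ≤ D by omega)
  have hk : 0 < k := by omega
  have hcast : ((k + 2 : ℕ) : ℚ) - 2 = k := by push_cast; ring
  simp only [hcast, natCeil_natCast_div_natCast, Nat.add_sub_cancel]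
  exact ⟨isGreatest_ceilDivSums_of_le hk, isGreatest_ceilDivSums_of_ge hk hm⟩

/-- Let `D ≥ 4` be even, `m ≥ 1`, `d ≥ 1`.  For a partition `ρ` of `d` with at most `m`
parts set `e_ρ := Σ_i ⌈ρ_i/(D−2)⌉`.  The maximum of `e_ρ` over all such partitions is
`d` if `d ≤ m`, and `m + ⌊(d−m)/(D−2)⌋` if `d ≥ m`. -/
theorem max_erho_even (D m d : ℕ) (hD : 4 ≤ D) (hDeven : Even D) (hm : 1 ≤ m)
    (hd : 1 ≤ d) :
    (d ≤ m → IsGreatest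
      {e : ℕ | ∃ ρ : Fin m → ℕ, (∀ i j : Fin m, i ≤ j → ρ j ≤ ρ i) ∧ (∑ i, ρ i = d) ∧
        e = ∑ i, ⌈(ρ i : ℚ) / ((D : ℚ) - 2)⌉₊} d) ∧
    (m ≤ d → IsGreatest
      {e : ℕ | ∃ ρ : Fin m → ℕ, (∀ i j : Fin m, i ≤ j → ρ j ≤ ρ i) ∧ (∑ i, ρ i = d) ∧
        e = ∑ i, ⌈(ρ i : ℚ) / ((D : ℚ) - 2)⌉₊} (m + (d - m) / (D - 2))) :=
  max_erho_even_general D m d (by omega) hm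
end

section
/- Let m ≥ 3 be odd. Then the number of even Latin squares of order m equals the number of odd Latin squares of order m. -/
/-!
Applying a permutation `σ` to the symbols of a Latin square of order `m` composes each of its `m`
columns with `σ`, and so multiplies the sign of the square by `sign σ ^ m`. For odd `m`, an odd
permutation of the symbols therefore exchanges the even and the odd squares.
-/

open scoped BigOperators

/-- `L` is a Latin square of order `m`: every row and every column of `L` is a
bijection of `{1,…,m}`. -/
def IsLatinSquare {m : ℕ} (L : Fin m → Fin m → Fin m) : Prop :=
  (∀ i, Function.Bijective fun j => L i j) ∧ (∀ j, Function.Bijective fun i => L i j)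

/-- The sign of a Latin square: the product over all columns `j` of the sign of the
permutation `i ↦ L i j`. -/
noncomputable def latinSign {m : ℕ} (L : Fin m → Fin m → Fin m) (h : IsLatinSquare L) :
    ℤˣ :=
  ∏ j : Fin m, Equiv.Perm.sign (Equiv.ofBijective (fun i => L i j) (h.2 j))

theorem isLatinSquare_perm_comp_iff {m : ℕ} (σ : Equiv.Perm (Fin m))
    {L : Fin m → Fin m → Fin m} :
    IsLatinSquare (fun i j => σ (L i j)) ↔ IsLatinSquare L :=
  and_congr (forall_congr' fun _ => σ.comp_bijective _) (forall_congr' fun _ => σ.comp_bijective _)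

theorem latinSign_perm_comp {m : ℕ} (σ : Equiv.Perm (Fin m)) {L : Fin m → Fin m → Fin m}
    (h : IsLatinSquare L) :
    latinSign (fun i j => σ (L i j)) ((isLatinSquare_perm_comp_iff σ).mpr h) =
      Equiv.Perm.sign σ ^ m * latinSign L h := by
  have column_eq (j : Fin m) :
      Equiv.ofBijective (fun i => σ (L i j)) (((isLatinSquare_perm_comp_iff σ).mpr h).2 j) =
        σ * Equiv.ofBijective (fun i => L i j) (h.2 j) :=
    Equiv.ext fun _ => rfl
  simp only [latinSign, column_eq, Equiv.Perm.sign_mul, Finset.prod_mul_distrib,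
    Finset.prod_const, Finset.card_univ, Fintype.card_fin]

theorem exists_latinSign_perm_comp_eq_iff {m : ℕ} (σ : Equiv.Perm (Fin m)) (ε : ℤˣ)
    {L : Fin m → Fin m → Fin m} :
    (∃ h : IsLatinSquare fun i j => σ (L i j),
      latinSign (fun i j => σ (L i j)) h = Equiv.Perm.sign σ ^ m * ε) ↔
    ∃ h : IsLatinSquare L, latinSign L h = ε := by
  simp only [isLatinSquare_perm_comp_iff]
  exact exists_congr fun h => by rw [latinSign_perm_comp σ h, mul_right_inj]

theorem card_latinSign_eq_card_latinSign_sign_pow_mul {m : ℕ} (σ : Equiv.Perm (Fin m)) (ε : ℤˣ) :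
    Nat.card {L : Fin m → Fin m → Fin m // ∃ h : IsLatinSquare L, latinSign L h = ε}
      = Nat.card {L : Fin m → Fin m → Fin m //
          ∃ h : IsLatinSquare L, latinSign L h = Equiv.Perm.sign σ ^ m * ε} :=
  let relabel : (Fin m → Fin m → Fin m) ≃ (Fin m → Fin m → Fin m) :=
    Equiv.piCongrRight fun _ => Equiv.piCongrRight fun _ => σ
  Nat.card_congr <| relabel.subtypeEquiv fun _ => (exists_latinSign_perm_comp_eq_iff σ ε).symm

/-- For odd `m ≥ 3`, the number of even Latin squares of order `m` equals the number of
odd Latin squares of order `m`. -/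
theorem even_eq_odd_latin_squares (m : ℕ) (hm : 3 ≤ m) (hmodd : Odd m) :
    Nat.card {L : Fin m → Fin m → Fin m // ∃ h : IsLatinSquare L, latinSign L h = 1}
      = Nat.card {L : Fin m → Fin m → Fin m // ∃ h : IsLatinSquare L, latinSign L h = -1} := by
  have : Nontrivial (Fin m) := Fin.nontrivial_iff_two_le.mpr (by omega)
  obtain ⟨σ, hσ⟩ := Equiv.Perm.sign_surjective (Fin m) (-1)
  simpa only [hσ, hmodd.neg_one_pow, mul_one] using
    card_latinSign_eq_card_latinSign_sign_pow_mul σ 1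
end

section
/- Let m ≥ 1, n ≥ 1, let λ be a partition with at most m rows, and let μ = λ^t be its transpose (so μ_c is the length of column c of λ). Let T be a tableau of shape λ with entries in {1,…,n} that is regular and duplex. For a real m×n matrix A, define f_T(A) := Σ_φ ∏_{c=1}^{λ_1} det(M_{φ,c}), where the sum is over all maps φ : {1,…,n} → {1,…,n}, and M_{φ,c} is the μ_c × μ_c real matrix whose entry in row r and column s is A_{r, φ(T(s,c))} (with T(s,c) the entry of T in row s of column c). Then f_T(A) ≥ 0 for every real m×n matrix A, and there exists a real m×n matrix A with f_T(A) > 0; in particular f_T is not identically zero. -/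
/-!
For a fixed substitution `φ`, the determinant attached to column `c` depends on `c` only through
the ordered column `T c`. As `T` is duplex, the product of the determinants is therefore a product
of even powers, so every summand of `f_T` is nonnegative. For strict positivity it suffices that
the summand of `φ = id` does not vanish, and this holds for a Vandermonde matrix with distinct
nodes: its column determinants are Vandermonde determinants in the entries of a regular column.
-/

open scoped BigOperators

/-- The function `f_T` associated to a tableau `T` given column-wise (column `c` has the
`μ c` entries `T c 0, …, T c (μ c - 1)`, all from `{1,…,n}`):
`f_T(A) = Σ_φ Π_c det(M_{φ,c})`, where the sum is over all maps
`φ : {1,…,n} → {1,…,n}` and `M_{φ,c}` is the `μ_c × μ_c` matrix whose `(r,s)` entry is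
`A_{r, φ(T(s,c))}`. -/
noncomputable def fTab (m n w : ℕ) (μ : Fin w → ℕ) (hle : ∀ c, μ c ≤ m)
    (T : (c : Fin w) → Fin (μ c) → Fin n) (A : Matrix (Fin m) (Fin n) ℝ) : ℝ :=
  ∑ φ : Fin n → Fin n, ∏ c : Fin w,
    (Matrix.of fun r s : Fin (μ c) => A (Fin.castLE (hle c) r) (φ (T c s))).det

open Finset Function Matrix

theorem prod_nonneg_of_even_card_fiber {ι κ R : Type*} [DecidableEq κ] [CommRing R]
    [LinearOrder R] [IsOrderedRing R] {f : ι → R} {g : ι → κ} {s : Finset ι}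
    (hfg : f.FactorsThrough g) (heven : ∀ i ∈ s, Even #{j ∈ s | g j = g i}) :
    0 ≤ ∏ i ∈ s, f i := by
  obtain ⟨e, rfl⟩ := (factorsThrough_iff f).1 hfg
  simp only [Function.comp_apply, prod_comp e g]
  refine prod_nonneg fun x hx => ?_
  obtain ⟨i, hi, rfl⟩ := mem_image.1 hx
  exact (heven i hi).pow_nonneg _

section TopMinor

variable {R α : Type*} [CommRing R] {m k : ℕ}

/-- The minor of `A` on its first `k` rows and on the columns `t 0, …, t (k - 1)`, in this order
and possibly with repetitions. -/
def topMinor (A : Matrix (Fin m) α R) (hk : k ≤ m) (t : Fin k → α) : R :=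
  (A.submatrix (Fin.castLE hk) t).det

theorem topMinor_congr (A : Matrix (Fin m) α R) {l : ℕ} (hk : k ≤ m) (hl : l ≤ m)
    {s : Fin k → α} {t : Fin l → α} (h : (⟨k, s⟩ : Σ j, Fin j → α) = ⟨l, t⟩) :
    topMinor A hk s = topMinor A hl t := by
  cases h
  rfl

theorem topMinor_rectVandermonde_transpose (v : α → R) (hk : k ≤ m) (t : Fin k → α) :
    topMinor (rectVandermonde v 1 m)ᵀ hk t = (vandermonde (v ∘ t)).det := by
  rw [← det_transpose (vandermonde _), topMinor]
  congr 1
  ext r s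
  simp [rectVandermonde_apply, vandermonde_apply]

end TopMinor

section Bideterminant

variable {R α ι : Type*} {m : ℕ} {μ : ι → ℕ}

/-- A tableau, given by its columns `T c` of lengths `μ c`, is duplex if every ordered column
occurs an even number of times. The sigma type makes columns of different lengths comparable. -/
def IsDuplex [DecidableEq α] [Fintype ι] (T : (c : ι) → Fin (μ c) → α) : Prop :=
  ∀ c, Even #{c' | (⟨μ c', T c'⟩ : Σ k, Fin k → α) = ⟨μ c, T c⟩}

/-- The bideterminant of `A` whose right tableau has columns `T c` and whose left tableau is the
canonical one, with every entry equal to its row index: the product over the columns of `T` of the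
corresponding minors of `A` on its first rows. -/
def bideterminant [CommRing R] [Fintype ι] (hle : ∀ c, μ c ≤ m) (T : (c : ι) → Fin (μ c) → α)
    (A : Matrix (Fin m) α R) : R :=
  ∏ c, topMinor A (hle c) (T c)

/-- The function `f_T` over an arbitrary commutative ring, for an arbitrary finite alphabet and
columns of arbitrary lengths: the sum of the bideterminants obtained by replacing the letters of
`T` along all self-maps of the alphabet. The replacement is carried out on the columns of `A`. -/
def substitutionSum [CommRing R] [Fintype α] [DecidableEq α] [Fintype ι] (hle : ∀ c, μ c ≤ m)
    (T : (c : ι) → Fin (μ c) → α) (A : Matrix (Fin m) α R) : R :=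
  ∑ φ : α → α, bideterminant hle T (A.submatrix id φ)

theorem bideterminant_rectVandermonde_transpose_ne_zero [CommRing R] [IsDomain R] [Fintype ι]
    (hle : ∀ c, μ c ≤ m) {T : (c : ι) → Fin (μ c) → α} (hreg : ∀ c, Injective (T c))
    {v : α → R} (hv : Injective v) :
    bideterminant hle T (rectVandermonde v 1 m)ᵀ ≠ 0 := by
  refine prod_ne_zero_iff.2 fun c _ => ?_
  rw [topMinor_rectVandermonde_transpose, det_vandermonde_ne_zero_iff]
  exact hv.comp (hreg c)

namespace IsDuplex

variable [CommRing R] [LinearOrder R] [IsOrderedRing R] [DecidableEq α] [Fintype ι]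
  {T : (c : ι) → Fin (μ c) → α}

theorem bideterminant_nonneg (hT : IsDuplex T) (hle : ∀ c, μ c ≤ m)
    (A : Matrix (Fin m) α R) : 0 ≤ bideterminant hle T A :=
  prod_nonneg_of_even_card_fiber (g := fun c => (⟨μ c, T c⟩ : Σ k, Fin k → α))
    (fun c c' h => topMinor_congr A (hle c) (hle c') h) fun c _ => hT c

theorem substitutionSum_nonneg [Fintype α] (hT : IsDuplex T) (hle : ∀ c, μ c ≤ m)
    (A : Matrix (Fin m) α R) : 0 ≤ substitutionSum hle T A :=
  sum_nonneg fun _ _ => hT.bideterminant_nonneg hle _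

theorem substitutionSum_pos [Fintype α] (hT : IsDuplex T) (hle : ∀ c, μ c ≤ m)
    {A : Matrix (Fin m) α R} (hA : bideterminant hle T A ≠ 0) : 0 < substitutionSum hle T A :=
  sum_pos' (fun _ _ => hT.bideterminant_nonneg hle _)
    ⟨id, mem_univ _, (hT.bideterminant_nonneg hle A).lt_of_ne' hA⟩

end IsDuplex

theorem fTab_nonneg_and_pos_general [CommRing R] [LinearOrder R] [IsStrictOrderedRing R]
    [Fintype α] [DecidableEq α] [Fintype ι] (hle : ∀ c, μ c ≤ m) {T : (c : ι) → Fin (μ c) → α}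
    (hreg : ∀ c, Injective (T c)) (hdup : IsDuplex T) :
    (∀ A : Matrix (Fin m) α R, 0 ≤ substitutionSum hle T A) ∧
      ∃ A : Matrix (Fin m) α R, 0 < substitutionSum hle T A := by
  refine ⟨hdup.substitutionSum_nonneg hle, ?_⟩
  have hnodes : Injective fun a : α => ((Fintype.equivFin α a : ℕ) : R) :=
    Nat.cast_injective.comp (Fin.val_injective.comp (Fintype.equivFin α).injective)
  exact ⟨_, hdup.substitutionSum_pos hle
    (bideterminant_rectVandermonde_transpose_ne_zero hle hreg hnodes)⟩

end Bideterminant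

theorem fTab_eq_substitutionSum {m n w : ℕ} {μ : Fin w → ℕ} (hle : ∀ c, μ c ≤ m)
    (T : (c : Fin w) → Fin (μ c) → Fin n) :
    fTab m n w μ hle T = substitutionSum hle T :=
  rfl

/-- If `T` is a regular and duplex tableau of a shape `λ` with at most `m` rows
(given column-wise via the transpose shape `μ = λᵗ`, `μ c` being the length of column
`c`), then `f_T(A) ≥ 0` for every real `m × n` matrix `A`, and `f_T(A) > 0` for some
`A`; in particular `f_T` is not identically zero. -/
theorem fTab_nonneg_and_pos (m n w : ℕ) (hm : 1 ≤ m) (hn : 1 ≤ n)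
    (μ : Fin w → ℕ) (hmono : ∀ c c' : Fin w, c ≤ c' → μ c' ≤ μ c)
    (hpos : ∀ c, 1 ≤ μ c) (hle : ∀ c, μ c ≤ m)
    (T : (c : Fin w) → Fin (μ c) → Fin n)
    (hreg : ∀ c, Function.Injective (T c))
    (hdup : ∀ c : Fin w, Even ((Finset.univ.filter (fun c' : Fin w =>
        (⟨μ c', T c'⟩ : Σ k : ℕ, (Fin k → Fin n)) = ⟨μ c, T c⟩)).card)) :
    (∀ A : Matrix (Fin m) (Fin n) ℝ, 0 ≤ fTab m n w μ hle T A) ∧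
    (∃ A : Matrix (Fin m) (Fin n) ℝ, 0 < fTab m n w μ hle T A) := by
  rw [fTab_eq_substitutionSum]
  exact fTab_nonneg_and_pos_general hle hreg hdup
end

section
/- Let m ≥ 1, e ≥ 1, δ ≥ 1, let λ be a partition with at most m rows, let T be a tableau of shape (m × e) + λ with entries in {1,…,δ}, and let S be a tableau of shape λ with entries in {1,…,m}. For a map φ : {1,…,δ} → {1,…,m}, write ψ(φ) := rightpart(φ(T)). Assume: (i) for every φ such that φ(T) is regular, ψ(φ) lies in the S_m-orbit of S; and (ii) there exists φ such that φ(T) is regular and ψ(φ) = S. Then there exists an integer α ≥ 1 such that for every tableau Ŝ in the S_m-orbit of S, the number of maps φ : {1,…,δ} → {1,…,m} with φ(T) regular and ψ(φ) = Ŝ equals α. -/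
open scoped BigOperators

section Specializations

open scoped Pointwise

variable {m : ℕ} {A B G : Type*} [Group G] [MulAction G B]

theorem tabCol_comp (f : A → B) (lam : Fin m → ℕ) (T : (r : Fin m) → Fin (lam r) → A) (c : ℕ) :
    tabCol lam (fun r c => f (T r c)) c = (tabCol lam T c).map f := by
  unfold tabCol
  rw [List.map_filterMap]
  congr 1
  funext r
  split_ifs <;> rfl

theorem tabRegular_comp_iff {f : A → B} (hf : Function.Injective f) (lam : Fin m → ℕ)
    (T : (r : Fin m) → Fin (lam r) → A) :
    TabRegular lam (fun r c => f (T r c)) ↔ TabRegular lam T := by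
  simp only [TabRegular, tabCol_comp, List.nodup_map_iff hf]

theorem tabRegular_smul_iff (g : G) (lam : Fin m → ℕ) (T : (r : Fin m) → Fin (lam r) → B) :
    TabRegular lam (g • T) ↔ TabRegular lam T :=
  tabRegular_comp_iff (MulAction.injective g) lam T

theorem tabRight_smul {M : Type*} [SMul M B] (a : M) (lam : Fin m → ℕ) (e : ℕ)
    (T : (r : Fin m) → Fin (e + lam r) → B) :
    tabRight lam e (a • T) = a • tabRight lam e T :=
  rfl

/-- The fiber over `S` of the map `φ ↦ rightpart(φ(T))`, restricted to those `φ` for which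
`φ(T)` is regular. -/
def regularFiber (lam : Fin m → ℕ) (e : ℕ) (T : (r : Fin m) → Fin (e + lam r) → A)
    (S : (r : Fin m) → Fin (lam r) → B) : Set (A → B) :=
  {φ | TabRegular (fun r => e + lam r) (fun r c => φ (T r c)) ∧
    tabRight lam e (fun r c => φ (T r c)) = S}

theorem smul_mem_regularFiber_smul_iff (g : G) (lam : Fin m → ℕ) (e : ℕ)
    (T : (r : Fin m) → Fin (e + lam r) → A) (S : (r : Fin m) → Fin (lam r) → B) (φ : A → B) :
    g • φ ∈ regularFiber lam e T (g • S) ↔ φ ∈ regularFiber lam e T S :=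
  and_congr (tabRegular_smul_iff g (fun r => e + lam r) fun r c => φ (T r c))
    ((tabRight_smul g lam e fun r c => φ (T r c)).congr_left.trans (smul_left_cancel_iff g))

theorem regularFiber_smul (g : G) (lam : Fin m → ℕ) (e : ℕ)
    (T : (r : Fin m) → Fin (e + lam r) → A) (S : (r : Fin m) → Fin (lam r) → B) :
    regularFiber lam e T (g • S) = g • regularFiber lam e T S := by
  ext φ
  rw [Set.mem_smul_set_iff_inv_smul_mem, ← smul_mem_regularFiber_smul_iff g lam e T S,
    smul_inv_smul]

variable (G) in
theorem equal_fibers_of_orbit_general [Finite A] [Finite B] (lam : Fin m → ℕ) (e : ℕ)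
    (T : (r : Fin m) → Fin (e + lam r) → A) (S : (r : Fin m) → Fin (lam r) → B)
    (hS : (regularFiber lam e T S).Nonempty) :
    ∃ α : ℕ, 1 ≤ α ∧ ∀ Shat ∈ MulAction.orbit G S, Nat.card (regularFiber lam e T Shat) = α := by
  have : Nonempty (regularFiber lam e T S) := hS.to_subtype
  refine ⟨Nat.card (regularFiber lam e T S), Nat.card_pos, ?_⟩
  rintro _ ⟨g, rfl⟩
  rw [regularFiber_smul, Set.natCard_smul_set]

end Specializations

/-- Claim (∗) of the paper: if every regular specialization `φ(T)` has its right part in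
the `S_m`-orbit of `S`, and some regular specialization has right part exactly `S`, then
every tableau in the `S_m`-orbit of `S` has the same (positive) number `α` of preimages
`φ` with `φ(T)` regular under `φ ↦ rightpart(φ(T))`. -/
theorem equal_fibers_of_orbit (m e δ : ℕ) (hm : 1 ≤ m) (he : 1 ≤ e) (hδ : 1 ≤ δ)
    (lam : Fin m → ℕ) (hlam : ∀ i j : Fin m, i ≤ j → lam j ≤ lam i)
    (T : (r : Fin m) → Fin (e + lam r) → Fin δ)
    (S : (r : Fin m) → Fin (lam r) → Fin m)
    (h1 : ∀ φ : Fin δ → Fin m,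
        TabRegular (fun r => e + lam r) (fun r c => φ (T r c)) →
        ∃ π : Equiv.Perm (Fin m),
          tabRight lam e (fun r c => φ (T r c)) = fun r c => π (S r c))
    (h2 : ∃ φ : Fin δ → Fin m,
        TabRegular (fun r => e + lam r) (fun r c => φ (T r c)) ∧
        tabRight lam e (fun r c => φ (T r c)) = S) :
    ∃ α : ℕ, 1 ≤ α ∧
      ∀ Shat : (r : Fin m) → Fin (lam r) → Fin m,
        (∃ π : Equiv.Perm (Fin m), Shat = fun r c => π (S r c)) →
        Nat.card {φ : Fin δ → Fin m //
          TabRegular (fun r => e + lam r) (fun r c => φ (T r c)) ∧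
          tabRight lam e (fun r c => φ (T r c)) = Shat} = α := by
  obtain ⟨α, hα, hcard⟩ := equal_fibers_of_orbit_general (Equiv.Perm (Fin m)) lam e T S h2
  exact ⟨α, hα, fun Shat ⟨π, hπ⟩ => hcard Shat ⟨π, hπ.symm⟩⟩
end
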